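/- For r = p/q ∈ ℚ∩(0,1) with s = s(r), t = t(r), the Hausdorff dimension of the set J(π(st^∞), π(ts^∞)) = {x ∈ [0,1] : T^n x ∉ (π(st^∞), π(ts^∞)) for all n ≥ 0} equals 1/q. -/

import Mathlib

/-- `u` is a (contiguous) factor of `w`. -/
def IsFactor (u w : List Bool) : Prop := ∃ l r : List Bool, w = l ++ u ++ r

/-- A binary word is balanced: any two factors of equal length have numbers of
`true`s (ones) differing by at most 1. -/
def BalancedW (w : List Bool) : Prop :=
  ∀ u v : List Bool, IsFactor u w → IsFactor v w → u.length = v.length →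
    (u.count true : ℤ) - (v.count true : ℤ) ≤ 1

/-- A word is cyclically balanced if all its cyclic rotations are balanced. -/
def CyclBalanced (w : List Bool) : Prop := ∀ k : ℕ, BalancedW (w.rotate k)

/-- Lexicographic `≤` on finite binary words (`false < true`). -/
def WordLe (u v : List Bool) : Prop := u = v ∨ List.Lex (· < ·) u v

/-- `w = s(p/q)`: the lexicographically largest cyclically balanced word of
length `q` with `p` ones beginning with `0`. -/
def IsSWord (p q : ℕ) (w : List Bool) : Prop :=
  w.length = q ∧ w.count true = p ∧ CyclBalanced w ∧ w.head? = some false ∧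
  ∀ w' : List Bool, w'.length = q → w'.count true = p → CyclBalanced w' →
    w'.head? = some false → WordLe w' w

/-- `w = t(p/q)`: the lexicographically smallest cyclically balanced word of
length `q` with `p` ones beginning with `1`. -/
def IsTWord (p q : ℕ) (w : List Bool) : Prop :=
  w.length = q ∧ w.count true = p ∧ CyclBalanced w ∧ w.head? = some true ∧
  ∀ w' : List Bool, w'.length = q → w'.count true = p → CyclBalanced w' →
    w'.head? = some true → WordLe w w'

noncomputable def T (x : ℝ) : ℝ := if x ≤ 1/2 then 2*x else 2*x - 1

/-- `π(w) = Σ_j w_j 2^{-j}`. -/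
noncomputable def piW (w : ℕ → Bool) : ℝ :=
  ∑' j : ℕ, (if w j then (1:ℝ) else 0) / 2 ^ (j + 1)

/-- The infinite periodic word `w^∞`. -/
def periodize (w : List Bool) (j : ℕ) : Bool := w.getD (j % w.length) false

/-- The infinite word `u v^∞`. -/
def wordThenPeriodic (u v : List Bool) (j : ℕ) : Bool :=
  if j < u.length then u.getD j false else periodize v (j - u.length)

/-- `w` is the infinite concatenation `a 0 ++ a 1 ++ a 2 ++ ⋯`. -/
def IsConcat (a : ℕ → List Bool) (w : ℕ → Bool) : Prop :=
  ∀ n : ℕ, ∀ j < (((List.range n).map a).flatten).length,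
    (((List.range n).map a).flatten).getD j false = w j

open Set Filter Topology MeasureTheory
open scoped ENNReal NNReal

section Doubling

theorem T_of_le {x : ℝ} (h : x ≤ 1 / 2) : T x = 2 * x := if_pos h

theorem T_of_lt {x : ℝ} (h : 1 / 2 < x) : T x = 2 * x - 1 := if_neg h.not_ge

theorem T_mem_Icc {x : ℝ} (h : x ∈ Icc (0 : ℝ) 1) : T x ∈ Icc (0 : ℝ) 1 := by
  obtain ⟨h0, h1⟩ := h
  rcases le_or_gt x (1 / 2) with hx | hx
  · rw [T_of_le hx]; constructor <;> linarith
  · rw [T_of_lt hx]; constructor <;> linarith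

theorem iterate_T_mem_Icc {x : ℝ} (h : x ∈ Icc (0 : ℝ) 1) (n : ℕ) :
    T^[n] x ∈ Icc (0 : ℝ) 1 := by
  induction n with
  | zero => exact h
  | succ n ih => rw [Function.iterate_succ_apply']; exact T_mem_Icc ih

theorem dimH_preimage_T_le (A : Set ℝ) : dimH (T ⁻¹' A) ≤ dimH A := by
  have key : ∀ c : ℝ, dimH ((fun x : ℝ => (x + c) / 2) '' A) ≤ dimH A := fun c => by
    refine LipschitzWith.dimH_image_le (K := 1) (LipschitzWith.of_dist_le_mul fun x y => ?_) A
    rw [Real.dist_eq, Real.dist_eq, show (x + c) / 2 - (y + c) / 2 = (x - y) / 2 by ring, abs_div,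
      abs_two, NNReal.coe_one]
    linarith [abs_nonneg (x - y)]
  have hsub : T ⁻¹' A ⊆ (fun x : ℝ => (x + 0) / 2) '' A ∪ (fun x : ℝ => (x + 1) / 2) '' A := by
    intro x hx
    rcases le_or_gt x (1 / 2) with h | h
    · exact Or.inl ⟨T x, hx, by simp only [T_of_le h]; ring⟩
    · exact Or.inr ⟨T x, hx, by simp only [T_of_lt h]; ring⟩
  refine (dimH_mono hsub).trans ?_
  rw [dimH_union]
  exact max_le (key 0) (key 1)

theorem dimH_preimage_iterate_T_le (A : Set ℝ) (n : ℕ) : dimH (T^[n] ⁻¹' A) ≤ dimH A := by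
  induction n with
  | zero => simp
  | succ n ih =>
    rw [Function.iterate_succ, preimage_comp]
    exact (dimH_preimage_T_le _).trans ih

/-- The points whose orbit stays outside a closed hole. -/
def Avoids (α β : ℝ) : Set ℝ := {x | x ∈ Icc (0 : ℝ) 1 ∧ ∀ n : ℕ, T^[n] x ∉ Icc α β}

variable {α β : ℝ}

theorem T_mem_Avoids {x : ℝ} (h : x ∈ Avoids α β) : T x ∈ Avoids α β :=
  ⟨T_mem_Icc h.1, fun n => by rw [← Function.iterate_succ_apply]; exact h.2 (n + 1)⟩

theorem iterate_T_mem_Avoids {x : ℝ} (h : x ∈ Avoids α β) (n : ℕ) : T^[n] x ∈ Avoids α β := by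
  induction n with
  | zero => exact h
  | succ n ih => rw [Function.iterate_succ_apply']; exact T_mem_Avoids ih

theorem lt_or_lt_of_mem_Avoids {x : ℝ} (h : x ∈ Avoids α β) : x < α ∨ β < x := by
  have := h.2 0
  simp only [Function.iterate_zero, id_eq, mem_Icc, not_and_or, not_le] at this
  exact this

/-- The part of `Avoids α β` in the interval `[2 * β - 1, 2 * α]`, on which the dynamics is
trapped. -/
def Trapped (α β : ℝ) : Set ℝ := Avoids α β ∩ Icc (2 * β - 1) (2 * α)

theorem T_mem_Trapped (hα : α ≤ 1 / 2) (hβ : 1 / 2 ≤ β) {x : ℝ} (h : x ∈ Trapped α β) :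
    T x ∈ Trapped α β := by
  refine ⟨T_mem_Avoids h.1, ?_⟩
  obtain ⟨h1, h2, h3⟩ := h
  have h0 := h1.1
  rcases lt_or_lt_of_mem_Avoids h1 with hx | hx
  · rw [T_of_le (by linarith)]; constructor <;> linarith [h0.1]
  · rw [T_of_lt (by linarith)]; constructor <;> linarith [h0.2]

theorem iterate_T_mem_Trapped (hα : α ≤ 1 / 2) (hβ : 1 / 2 ≤ β) {x : ℝ} (h : x ∈ Trapped α β)
    (n : ℕ) : T^[n] x ∈ Trapped α β := by
  induction n with
  | zero => exact h
  | succ n ih => rw [Function.iterate_succ_apply']; exact T_mem_Trapped hα hβ ih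

theorem abs_sub_of_abs_T_sub_lt (hα : α ≤ 1 / 2) (hβ : 1 / 2 ≤ β) {x y : ℝ}
    (hx : x ∈ Trapped α β) (hy : y ∈ Trapped α β) (h : |T x - T y| < 4 * (β - α) - 1) :
    |x - y| = |T x - T y| / 2 := by
  obtain ⟨hx1, hx2, hx3⟩ := hx
  obtain ⟨hy1, hy2, hy3⟩ := hy
  rw [abs_lt] at h
  rcases lt_or_lt_of_mem_Avoids hx1 with hx | hx <;> rcases lt_or_lt_of_mem_Avoids hy1 with hy | hy
  · rw [T_of_le (hx.le.trans hα), T_of_le (hy.le.trans hα), ← mul_sub, abs_mul,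
      abs_two]; ring
  · rw [T_of_le (hx.le.trans hα), T_of_lt (hβ.trans_lt hy)] at h
    linarith
  · rw [T_of_lt (hβ.trans_lt hx), T_of_le (hy.le.trans hα)] at h
    linarith
  · rw [T_of_lt (hβ.trans_lt hx), T_of_lt (hβ.trans_lt hy),
      show 2 * x - 1 - (2 * y - 1) = 2 * (x - y) by ring, abs_mul, abs_two]; ring

theorem abs_sub_of_abs_iterate_T_sub_lt (hα : α ≤ 1 / 2) (hβ : 1 / 2 ≤ β) (n : ℕ) {x y : ℝ}
    (hx : x ∈ Trapped α β) (hy : y ∈ Trapped α β)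
    (h : |T^[n] x - T^[n] y| < 4 * (β - α) - 1) :
    |x - y| = |T^[n] x - T^[n] y| / 2 ^ n := by
  induction n generalizing x y with
  | zero => simp
  | succ n ih =>
    rw [Function.iterate_succ_apply, Function.iterate_succ_apply] at h ⊢
    have h1 := ih (T_mem_Trapped hα hβ hx) (T_mem_Trapped hα hβ hy) h
    have h2 : |T x - T y| ≤ |T^[n] (T x) - T^[n] (T y)| := by
      rw [h1]; exact div_le_self (abs_nonneg _) (one_le_pow₀ one_le_two)
    rw [abs_sub_of_abs_T_sub_lt hα hβ hx hy (h2.trans_lt h), h1, pow_succ]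
    field_simp

/-- Two points of the trapped set are never close all the time, so there are finitely many. -/
theorem finite_Trapped (hα : α ≤ 1 / 2) (hβ : 1 / 2 ≤ β) (h : 1 / 4 < β - α) :
    (Trapped α β).Finite := by
  obtain ⟨M, hM⟩ := exists_nat_gt (1 / (4 * (β - α) - 1))
  have hη : 0 < 4 * (β - α) - 1 := by linarith
  have hM0 : (0 : ℝ) < M := (by positivity : (0 : ℝ) < 1 / (4 * (β - α) - 1)).trans hM
  by_contra hinf
  obtain ⟨F, hF, hcard⟩ := Set.Infinite.exists_subset_card_eq hinf (M + 2)
  have hev : ∀ᶠ n : ℕ in atTop, ∀ z ∈ F.offDiag, ((1 : ℝ) / 2) ^ n < |z.1 - z.2| := by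
    rw [Filter.eventually_all_finset]
    intro z hz
    have hz' : 0 < |z.1 - z.2| := abs_pos.2 (sub_ne_zero.2 (Finset.mem_offDiag.1 hz).2.2)
    exact (tendsto_pow_atTop_nhds_zero_of_lt_one (by norm_num : (0 : ℝ) ≤ 1 / 2)
      (by norm_num)).eventually_lt_const hz'
  obtain ⟨n, hn⟩ := hev.exists
  have hmaps : ∀ x ∈ F, ⌊(M : ℝ) * T^[n] x⌋₊ ∈ Finset.range (M + 1) := by
    intro x hx
    have := iterate_T_mem_Icc (hF hx).1.1 n
    rw [Finset.mem_range, Nat.lt_succ_iff]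
    refine Nat.floor_le_of_le ?_
    nlinarith [this.2]
  obtain ⟨x, hx, y, hy, hne, hxy⟩ := Finset.exists_ne_map_eq_of_card_lt_of_maps_to
    (by rw [Finset.card_range, hcard]; omega) hmaps
  have hlt : |T^[n] x - T^[n] y| < 4 * (β - α) - 1 := by
    have h1 : |(M : ℝ) * T^[n] x - M * T^[n] y| < 1 := by
      refine Int.abs_sub_lt_one_of_floor_eq_floor ?_
      rw [← Int.natCast_floor_eq_floor (mul_nonneg hM0.le (iterate_T_mem_Icc (hF hx).1.1 n).1),
        ← Int.natCast_floor_eq_floor (mul_nonneg hM0.le (iterate_T_mem_Icc (hF hy).1.1 n).1), hxy]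
    rw [← mul_sub, abs_mul, abs_of_pos hM0, mul_comm, ← lt_div_iff₀ hM0] at h1
    refine h1.trans ?_
    rwa [div_lt_comm₀ hM0 hη]
  have heq := abs_sub_of_abs_iterate_T_sub_lt hα hβ n (hF hx) (hF hy) hlt
  have hle : |T^[n] x - T^[n] y| ≤ 1 := by
    have h1 := iterate_T_mem_Icc (hF hx).1.1 n
    have h2 := iterate_T_mem_Icc (hF hy).1.1 n
    rw [abs_le]; constructor <;> linarith [h1.1, h1.2, h2.1, h2.2]
  have h3 := hn (x, y) (Finset.mem_offDiag.2 ⟨hx, hy, hne⟩)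
  simp only [heq, one_div, inv_pow] at h3
  rw [div_eq_mul_inv] at h3
  have : (0 : ℝ) < (2 ^ n)⁻¹ := by positivity
  nlinarith

theorem iterate_T_eq_of_forall_lt {x c : ℝ} (hc : c ≤ 1 / 2) (n : ℕ)
    (h : ∀ m < n, T^[m] x < c) : T^[n] x = 2 ^ n * x := by
  induction n with
  | zero => simp
  | succ n ih =>
    rw [Function.iterate_succ_apply', T_of_le ((h n n.lt_succ_self).le.trans hc),
      ih fun m hm => h m (hm.trans n.lt_succ_self)]
    ring

theorem one_sub_iterate_T_eq_of_forall_gt {x c : ℝ} (hc : 1 / 2 ≤ c) (n : ℕ)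
    (h : ∀ m < n, c < T^[m] x) : 1 - T^[n] x = 2 ^ n * (1 - x) := by
  induction n with
  | zero => simp
  | succ n ih =>
    have := ih fun m hm => h m (hm.trans n.lt_succ_self)
    rw [Function.iterate_succ_apply', T_of_lt (hc.trans_lt (h n n.lt_succ_self))]
    linear_combination 2 * this

theorem exists_one_lt_two_pow_mul {x : ℝ} (hx : 0 < x) : ∃ n : ℕ, 1 < 2 ^ n * x := by
  obtain ⟨n, hn⟩ := pow_unbounded_of_one_lt (1 / x) one_lt_two
  exact ⟨n, by rwa [div_lt_iff₀ hx] at hn⟩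

theorem exists_iterate_T_mem_Trapped (hα : α ≤ 1 / 2) (hβ : 1 / 2 ≤ β) {x : ℝ}
    (h : x ∈ Avoids α β) (h0 : x ≠ 0) (h1 : x ≠ 1) : ∃ n, T^[n] x ∈ Trapped α β := by
  have hx0 : 0 < x := lt_of_le_of_ne h.1.1 h0.symm
  have hx1 : x < 1 := lt_of_le_of_ne h.1.2 h1
  have hI := fun n => iterate_T_mem_Icc h.1 n
  rcases lt_or_lt_of_mem_Avoids h with hx | hx
  · by_cases hm : x < 2 * β - 1
    · have hb : ∃ n, ¬ T^[n] x < 2 * β - 1 := by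
        by_contra! hcon
        have hlt : ∀ n, T^[n] x < α := fun n =>
          (lt_or_lt_of_mem_Avoids (iterate_T_mem_Avoids h n)).resolve_right
            fun hc => by linarith [hcon n, (hI n).2]
        obtain ⟨n, hn⟩ := exists_one_lt_two_pow_mul hx0
        rw [← iterate_T_eq_of_forall_lt hα n fun m _ => hlt m] at hn
        exact hn.not_ge (hI n).2
      classical
      have hs := Nat.find_spec hb
      cases hn : Nat.find hb with
      | zero => rw [hn] at hs; exact absurd hm hs
      | succ k =>
        rw [hn] at hs
        have hk : T^[k] x < 2 * β - 1 := not_not.1 (Nat.find_min hb (hn ▸ k.lt_succ_self))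
        have hk' : T^[k] x < α := (lt_or_lt_of_mem_Avoids (iterate_T_mem_Avoids h k)).resolve_right
          fun hc => by linarith [(hI k).2]
        refine ⟨k + 1, iterate_T_mem_Avoids h _, not_lt.1 hs, ?_⟩
        rw [Function.iterate_succ_apply', T_of_le (by linarith)]
        linarith
    · exact ⟨0, h, not_lt.1 hm, by simp only [Function.iterate_zero, id_eq]; linarith⟩
  · by_cases hm : 2 * α < x
    · have hb : ∃ n, ¬ 2 * α < T^[n] x := by
        by_contra! hcon
        have hlt : ∀ n, β < T^[n] x := fun n =>
          (lt_or_lt_of_mem_Avoids (iterate_T_mem_Avoids h n)).resolve_left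
            fun hc => by linarith [hcon n, (hI n).1]
        obtain ⟨n, hn⟩ := exists_one_lt_two_pow_mul (sub_pos.2 hx1)
        rw [← one_sub_iterate_T_eq_of_forall_gt hβ n fun m _ => hlt m] at hn
        linarith [(hI n).1]
      classical
      have hs := Nat.find_spec hb
      cases hn : Nat.find hb with
      | zero => rw [hn] at hs; exact absurd hm hs
      | succ k =>
        rw [hn] at hs
        have hk : 2 * α < T^[k] x := not_not.1 (Nat.find_min hb (hn ▸ k.lt_succ_self))
        have hk' : β < T^[k] x := (lt_or_lt_of_mem_Avoids (iterate_T_mem_Avoids h k)).resolve_left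
          fun hc => by linarith [(hI k).1]
        refine ⟨k + 1, iterate_T_mem_Avoids h _, ?_, not_lt.1 hs⟩
        rw [Function.iterate_succ_apply', T_of_lt (by linarith)]
        linarith
    · exact ⟨0, h, by simp only [Function.iterate_zero, id_eq]; linarith [h.1.2], not_lt.1 hm⟩

/-- Almost no orbits avoid a hole around `1 / 2` of length more than `1 / 4`. -/
theorem dimH_Avoids (hα : α ≤ 1 / 2) (hβ : 1 / 2 ≤ β) (h : 1 / 4 < β - α) :
    dimH (Avoids α β) = 0 := by
  have hsub : Avoids α β ⊆ {0, 1} ∪ ⋃ n : ℕ, T^[n] ⁻¹' Trapped α β := by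
    intro x hx
    by_cases h0 : x = 0
    · simp [h0]
    by_cases h1 : x = 1
    · simp [h1]
    obtain ⟨n, hn⟩ := exists_iterate_T_mem_Trapped hα hβ hx h0 h1
    exact Or.inr (mem_iUnion.2 ⟨n, hn⟩)
  refine le_antisymm ((dimH_mono hsub).trans ?_) zero_le
  rw [dimH_union, dimH_iUnion]
  refine max_le (dimH_finite (Set.toFinite _)).le (iSup_le fun n => ?_)
  exact (dimH_preimage_iterate_T_le _ n).trans (dimH_finite (finite_Trapped hα hβ h)).le

end Doubling

section CantorDimension

/-- A bounded set covered by its images under two contractions of ratio `2 ^ (-q)` has dimension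
at most `1 / q`. -/
theorem dimH_le_inv_of_forall_exists_contraction {q : ℕ} (hq : q ≠ 0) {E : Set ℝ} {u ℓ : ℝ}
    (hℓ : 0 ≤ ℓ) (hE : E ⊆ Icc u (u + ℓ)) (g : Bool → ℝ)
    (h : ∀ x ∈ E, ∃ i, ∃ y ∈ E, x = g i + (y - g i) / 2 ^ q) : dimH E ≤ (q : ℝ≥0∞)⁻¹ := by
  have hQ : (0 : ℝ) < 2 ^ q := by positivity
  have hcov : ∀ n : ℕ, ∃ c : (Fin n → Bool) → ℝ,
      E ⊆ ⋃ σ, Icc (c σ) (c σ + ℓ / (2 ^ q) ^ n) := by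
    intro n
    induction n with
    | zero => exact ⟨fun _ => u, hE.trans fun x hx => mem_iUnion.2 ⟨Fin.elim0, by simpa using hx⟩⟩
    | succ n ih =>
      obtain ⟨c, hc⟩ := ih
      refine ⟨fun τ => g (τ 0) + (c (Fin.tail τ) - g (τ 0)) / 2 ^ q, fun x hx => ?_⟩
      obtain ⟨i, y, hy, rfl⟩ := h x hx
      obtain ⟨σ, hσ1, hσ2⟩ := mem_iUnion.1 (hc hy)
      refine mem_iUnion.2 ⟨Fin.cons i σ, ?_⟩
      simp only [Fin.cons_zero, Fin.tail_cons]
      constructor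
      · gcongr
      · rw [pow_succ, ← div_div, add_assoc, ← add_div]
        gcongr
        linarith
  choose c hc using hcov
  have hne : μH[((q : ℝ≥0)⁻¹ : ℝ≥0)] E ≠ ∞ := by
    have hdiam : ∀ n (σ : Fin n → Bool), Metric.ediam (Icc (c n σ) (c n σ + ℓ / (2 ^ q) ^ n)) =
        ENNReal.ofReal (ℓ / (2 ^ q) ^ n) := fun n σ => by
      rw [Real.ediam_Icc, add_sub_cancel_left]
    have hlim : Tendsto (fun n : ℕ => ENNReal.ofReal (ℓ / (2 ^ q) ^ n)) atTop (𝓝 0) := by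
      rw [← ENNReal.ofReal_zero]
      refine ENNReal.tendsto_ofReal ?_
      have := (tendsto_pow_atTop_nhds_zero_of_lt_one (r := ((2 : ℝ) ^ q)⁻¹) (by positivity)
        (inv_lt_one_of_one_lt₀ (one_lt_pow₀ one_lt_two hq))).const_mul ℓ
      simpa [div_eq_mul_inv] using this
    have hle := Measure.hausdorffMeasure_le_liminf_sum ((q : ℝ≥0)⁻¹ : ℝ≥0) E _ hlim
      (fun n σ => Icc (c n σ) (c n σ + ℓ / (2 ^ q) ^ n))
      (Eventually.of_forall fun n σ => (hdiam n σ).le) (Eventually.of_forall hc)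
    have hsum : ∀ n : ℕ, ∑ σ : Fin n → Bool,
        Metric.ediam (Icc (c n σ) (c n σ + ℓ / (2 ^ q) ^ n)) ^ (((q : ℝ≥0)⁻¹ : ℝ≥0) : ℝ) =
        ENNReal.ofReal (ℓ ^ (q : ℝ)⁻¹) := by
      intro n
      simp only [hdiam]
      rw [Finset.sum_const, Finset.card_univ, Fintype.card_fun, Fintype.card_bool, Fintype.card_fin,
        nsmul_eq_mul, NNReal.coe_inv, NNReal.coe_natCast,
        ENNReal.ofReal_rpow_of_nonneg (by positivity) (by positivity),
        Real.div_rpow hℓ (by positivity), ← pow_mul, mul_comm q n, pow_mul,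
        Real.pow_rpow_inv_natCast (by positivity) hq, ← ENNReal.ofReal_natCast,
        ← ENNReal.ofReal_mul (by positivity)]
      congr 1
      push_cast
      field_simp
    simp only [hsum, liminf_const] at hle
    exact (hle.trans_lt ENNReal.ofReal_lt_top).ne
  have := dimH_le_of_hausdorffMeasure_ne_top hne
  rwa [ENNReal.coe_inv (by simpa using hq), ENNReal.coe_natCast] at this

/-- The number with binary digits `x` read in base `2 ^ q`. -/
noncomputable def spread {q : ℕ} (hq : 1 ≤ q) (x : ℕ → Fin 2) : ℝ :=
  Real.ofDigits (b := 2 ^ q) fun i => Fin.castLE (Nat.le_self_pow (by omega) 2) (x i)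

variable {q : ℕ}

theorem spread_nonneg (hq : 1 ≤ q) (x : ℕ → Fin 2) : 0 ≤ spread hq x := Real.ofDigits_nonneg _

theorem spread_eq (hq : 1 ≤ q) (x : ℕ → Fin 2) :
    spread hq x = ((x 0 : ℕ) + spread hq fun i => x (i + 1)) / 2 ^ q := by
  rw [spread, Real.ofDigits_eq_sum_add_ofDigits _ 1, spread]
  simp only [Finset.range_one, Finset.sum_singleton, Real.ofDigitsTerm, Fin.val_castLE]
  push_cast
  ring

theorem one_lt_two_pow_real (hq : 1 ≤ q) : (1 : ℝ) < 2 ^ q := one_lt_pow₀ one_lt_two (by omega)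

theorem spread_le (hq : 1 ≤ q) (x : ℕ → Fin 2) : spread hq x ≤ 1 / (2 ^ q - 1) := by
  have hQ := one_lt_two_pow_real hq
  have hr : ((2 : ℝ) ^ q)⁻¹ < 1 := inv_lt_one_of_one_lt₀ hQ
  have hs : HasSum (fun n : ℕ => ((2 : ℝ) ^ q)⁻¹ * ((2 ^ q)⁻¹) ^ n) (1 / (2 ^ q - 1)) := by
    have h1 := (hasSum_geometric_of_lt_one (by positivity) hr).mul_left ((2 : ℝ) ^ q)⁻¹
    rwa [← mul_inv, mul_sub, mul_inv_cancel₀ (by positivity), mul_one, inv_eq_one_div (_ - 1)] at h1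
  rw [← hs.tsum_eq]
  refine Summable.tsum_le_tsum (fun n => ?_) Real.summable_ofDigitsTerm hs.summable
  simp only [Real.ofDigitsTerm, Fin.val_castLE]
  have : ((x n : ℕ) : ℝ) ≤ 1 := by exact_mod_cast Nat.lt_succ_iff.1 (x n).isLt
  push_cast
  rw [inv_pow, ← mul_inv, ← pow_succ']
  exact mul_le_of_le_one_left (by positivity) this

/-- The gap between spread numbers with distinct leading digits. -/
noncomputable def spreadGap (q : ℕ) : ℝ := (1 - 1 / (2 ^ q - 1)) / 2 ^ q

theorem spreadGap_pos (hq : 2 ≤ q) : 0 < spreadGap q := by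
  have h4 : (4 : ℝ) ≤ 2 ^ q := by
    calc (4 : ℝ) = 2 ^ 2 := by norm_num
      _ ≤ 2 ^ q := pow_le_pow_right₀ one_le_two hq
  refine div_pos (sub_pos.2 ?_) (by positivity)
  rw [div_lt_one (by linarith)]
  linarith

theorem spreadGap_le (hq : 1 ≤ q) {x y : ℕ → Fin 2} (h : x 0 ≠ y 0) :
    spreadGap q ≤ |spread hq x - spread hq y| := by
  wlog hlt : y 0 < x 0 generalizing x y
  · rw [abs_sub_comm]
    exact this h.symm (lt_of_le_of_ne (not_lt.1 hlt) h)
  have hx : x 0 = 1 := by omega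
  have hy : y 0 = 0 := by omega
  refine le_trans ?_ (le_abs_self _)
  rw [spread_eq hq x, spread_eq hq y, hx, hy, ← sub_div, spreadGap]
  have h1 := spread_nonneg hq fun i => x (i + 1)
  have h2 := spread_le hq fun i => y (i + 1)
  refine div_le_div_of_nonneg_right ?_ (by positivity)
  simp only [Fin.val_one, Fin.val_zero, Nat.cast_one, Nat.cast_zero]
  linarith

theorem spreadGap_div_le (hq : 1 ≤ q) (k : ℕ) {x y : ℕ → Fin 2} (h : ∀ i < k, x i = y i)
    (hk : x k ≠ y k) : spreadGap q / (2 ^ q) ^ k ≤ |spread hq x - spread hq y| := by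
  induction k generalizing x y with
  | zero => simpa using spreadGap_le hq hk
  | succ k ih =>
    have := ih (x := fun i => x (i + 1)) (y := fun i => y (i + 1))
      (fun i hi => h (i + 1) (by omega)) hk
    rw [spread_eq hq x, spread_eq hq y, h 0 k.succ_pos, ← sub_div, add_sub_add_left_eq_sub, abs_div,
      abs_of_pos (by positivity : (0 : ℝ) < 2 ^ q), pow_succ, ← div_div]
    gcongr

theorem abs_ofDigits_sub_le_spread (hq : 2 ≤ q) (x y : ℕ → Fin 2) :
    |Real.ofDigits x - Real.ofDigits y| ≤
      (spreadGap q)⁻¹ ^ (q : ℝ)⁻¹ *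
        |spread (one_le_two.trans hq) x - spread (one_le_two.trans hq) y| ^ (q : ℝ)⁻¹ := by
  by_cases hxy : x = y
  · rw [hxy, sub_self, abs_zero]
    have := (spreadGap_pos hq).le
    positivity
  have hex : ∃ k, x k ≠ y k := Function.ne_iff.1 hxy
  classical
  have hmin : ∀ i < Nat.find hex, x i = y i := fun i hi => not_not.1 (Nat.find_min hex hi)
  have h1 := spreadGap_div_le (one_le_two.trans hq) _ hmin (Nat.find_spec hex)
  have h2 := Real.abs_ofDigits_sub_ofDigits_le hmin
  have hgap := spreadGap_pos hq
  refine h2.trans ?_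
  rw [← Real.mul_rpow (by positivity) (abs_nonneg _)]
  calc (((2 : ℕ) : ℝ) ^ Nat.find hex)⁻¹
      = (((2 ^ Nat.find hex)⁻¹ : ℝ) ^ q) ^ (q : ℝ)⁻¹ := by
        rw [Real.pow_rpow_inv_natCast (by positivity) (by omega)]; norm_num
    _ ≤ _ := by
        refine Real.rpow_le_rpow (by positivity) ?_ (by positivity)
        rw [inv_mul_eq_div, le_div_iff₀ hgap, mul_comm]
        refine le_trans (le_of_eq ?_) h1
        rw [inv_pow, ← pow_mul, ← pow_mul, mul_comm q, div_eq_mul_inv]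

theorem spread_injective (hq : 2 ≤ q) :
    Function.Injective (spread (one_le_two.trans hq)) := by
  intro x y hxy
  by_contra hne
  have hex : ∃ k, x k ≠ y k := Function.ne_iff.1 hne
  classical
  have h1 := spreadGap_div_le (one_le_two.trans hq) _
    (fun i hi => not_not.1 (Nat.find_min hex hi)) (Nat.find_spec hex)
  rw [hxy, sub_self, abs_zero] at h1
  have := spreadGap_pos hq
  have : 0 < spreadGap q / (2 ^ q) ^ Nat.find hex := by positivity
  linarith

theorem le_dimH_range_spread (hq : 2 ≤ q) :
    (q : ℝ≥0∞)⁻¹ ≤ dimH (range (spread (one_le_two.trans hq))) := by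
  set f : ℝ → ℝ := Function.extend (spread (one_le_two.trans hq)) Real.ofDigits 0
  have hf : ∀ x, f (spread (one_le_two.trans hq) x) = Real.ofDigits x :=
    (spread_injective hq).extend_apply _ _
  have hgap := spreadGap_pos hq
  have hh : HolderOnWith (Real.toNNReal ((spreadGap q)⁻¹ ^ (q : ℝ)⁻¹)) (q : ℝ≥0)⁻¹ f
      (range (spread (one_le_two.trans hq))) := by
    rintro _ ⟨x, rfl⟩ _ ⟨y, rfl⟩
    rw [hf, hf, edist_dist, edist_dist, Real.dist_eq, Real.dist_eq, NNReal.coe_inv,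
      NNReal.coe_natCast, ENNReal.ofReal_rpow_of_nonneg (abs_nonneg _) (by positivity)]
    change _ ≤ ENNReal.ofReal _ * _
    rw [← ENNReal.ofReal_mul (by positivity)]
    exact ENNReal.ofReal_le_ofReal (abs_ofDigits_sub_le_spread hq x y)
  have himage : Icc (0 : ℝ) 1 ⊆ f '' range (spread (one_le_two.trans hq)) := by
    intro z hz
    obtain ⟨x, -, hx⟩ := Real.ofDigits_SurjOn one_lt_two hz
    exact ⟨_, ⟨x, rfl⟩, (hf x).trans hx⟩
  have h1 : dimH (Icc (0 : ℝ) 1) = 1 := by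
    rw [Real.dimH_of_nonempty_interior (by rw [interior_Icc]; exact nonempty_Ioo.2 one_pos)]
    simp
  have h2 := (dimH_mono himage).trans (hh.dimH_image_le (by simp; omega))
  rw [h1, ENNReal.coe_inv (by simp; omega), ENNReal.coe_natCast,
    ENNReal.le_div_iff_mul_le (by simp) (Or.inl (by simp; omega)), one_mul] at h2
  exact h2

end CantorDimension

section WordValues

theorem piW_eq_ofDigits (w : ℕ → Bool) :
    piW w = Real.ofDigits fun i => if w i then (1 : Fin 2) else 0 := by
  refine tsum_congr fun i => ?_
  by_cases h : w i <;> simp [Real.ofDigitsTerm, h]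

theorem piW_nonneg (w : ℕ → Bool) : 0 ≤ piW w := by
  rw [piW_eq_ofDigits]; exact Real.ofDigits_nonneg _

theorem piW_le_one (w : ℕ → Bool) : piW w ≤ 1 := by
  rw [piW_eq_ofDigits]; exact Real.ofDigits_le_one _

theorem piW_eq (w : ℕ → Bool) :
    piW w = ((if w 0 then 1 else 0) + piW fun i => w (i + 1)) / 2 := by
  rw [piW_eq_ofDigits, piW_eq_ofDigits, Real.ofDigits_eq_sum_add_ofDigits _ 1]
  by_cases h : w 0 <;> simp [Real.ofDigitsTerm, h] <;> ring

/-- The value of a finite binary word read after the binary point. -/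
noncomputable def wordVal : List Bool → ℝ
  | [] => 0
  | b :: l => ((if b then 1 else 0) + wordVal l) / 2

theorem wordVal_mem_Icc (l : List Bool) : wordVal l ∈ Icc (0 : ℝ) 1 := by
  induction l with
  | nil => simp [wordVal]
  | cons b l ih =>
    obtain ⟨h0, h1⟩ := ih
    cases b <;> simp only [wordVal, Bool.false_eq_true, if_true, if_false] <;>
      constructor <;> linarith

theorem WordLe.wordVal_le {u v : List Bool} (h : WordLe u v) : wordVal u ≤ wordVal v := by
  rcases h with rfl | h
  · exact le_rfl
  induction h with
  | nil => exact (wordVal_mem_Icc _).1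
  | cons _ ih => simp only [wordVal]; linarith
  | @rel a l₁ b l₂ hab =>
    obtain ⟨rfl, rfl⟩ : a = false ∧ b = true := Bool.lt_iff.1 hab
    have h1 := (wordVal_mem_Icc l₁).2
    have h2 := (wordVal_mem_Icc l₂).1
    simp only [wordVal, Bool.false_eq_true, if_true, if_false]
    linarith

theorem piW_wordThenPeriodic (u v : List Bool) :
    piW (wordThenPeriodic u v) = wordVal u + piW (periodize v) / 2 ^ u.length := by
  induction u with
  | nil =>
    have : wordThenPeriodic [] v = periodize v := by funext i; simp [wordThenPeriodic]
    simp [wordVal, this]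
  | cons b u ih =>
    have hshift : (fun i => wordThenPeriodic (b :: u) v (i + 1)) = wordThenPeriodic u v := by
      funext i
      simp [wordThenPeriodic]
    rw [piW_eq, hshift, ih]
    simp only [wordThenPeriodic, List.length_cons, Nat.zero_lt_succ, if_true, wordVal,
      List.getD_cons_zero]
    rw [pow_succ]
    field_simp
    ring

theorem wordThenPeriodic_self (w : List Bool) :
    wordThenPeriodic w w = periodize w := by
  funext i
  unfold wordThenPeriodic periodize
  split_ifs with h
  · rw [Nat.mod_eq_of_lt h]
  · rw [← Nat.mod_eq_sub_mod (not_lt.1 h)]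

theorem wordVal_eq (w : List Bool) :
    wordVal w = piW (periodize w) - piW (periodize w) / 2 ^ w.length := by
  have := piW_wordThenPeriodic w w
  rw [wordThenPeriodic_self] at this
  linarith

theorem WordLe.piW_periodize_le {u v : List Bool} (h : WordLe u v) (hlen : u.length = v.length)
    (hv : 0 < v.length) : piW (periodize u) ≤ piW (periodize v) := by
  have hle := h.wordVal_le
  rw [wordVal_eq u, wordVal_eq v, hlen] at hle
  have hQ : (1 : ℝ) < 2 ^ v.length := one_lt_pow₀ one_lt_two hv.ne'
  have hr : ((2 : ℝ) ^ v.length)⁻¹ < 1 := inv_lt_one_of_one_lt₀ hQ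
  simp only [div_eq_mul_inv] at hle
  nlinarith

end WordValues

section BalancedWords

theorem periodize_periodic (w : List Bool) : Function.Periodic (periodize w) w.length := by
  intro i
  simp [periodize]

theorem rotate_eq_map_range' (w : List Bool) (k : ℕ) :
    w.rotate k = (List.range' k w.length).map (periodize w) := by
  refine List.ext_getElem (by simp) fun i h1 h2 => ?_
  have hi : i < w.length := by simpa using h1
  simp only [List.getElem_rotate, List.getElem_map, List.getElem_range', periodize, one_mul]
  rw [add_comm i k, List.getD_eq_getElem]

theorem periodize_rotate (w : List Bool) (k i : ℕ) :
    periodize (w.rotate k) i = periodize w (i + k) := by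
  rcases Nat.eq_zero_or_pos w.length with h | h
  · simp [List.length_eq_zero_iff.1 h, periodize]
  · have hi : i % w.length < w.length := Nat.mod_lt _ h
    simp only [periodize, List.length_rotate]
    rw [List.getD_eq_getElem _ _ (by simpa using hi), List.getElem_rotate,
      List.getD_eq_getElem _ _ (Nat.mod_lt _ h)]
    simp

theorem CyclBalanced.rotate {w : List Bool} (h : CyclBalanced w) (k : ℕ) :
    CyclBalanced (w.rotate k) := fun j => by rw [List.rotate_rotate]; exact h _

/-- The number of ones of `f` in the window of length `n` starting at `a`. -/
def ones (f : ℕ → Bool) (a n : ℕ) : ℕ := ((List.range' a n).map f).count true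

variable {f : ℕ → Bool} {w : List Bool}

theorem ones_add (f : ℕ → Bool) (a m n : ℕ) : ones f a (m + n) = ones f a m + ones f (a + m) n := by
  rw [ones, ← List.range'_append_1, List.map_append, List.count_append, ones, ones]

theorem ones_one (f : ℕ → Bool) (a : ℕ) : ones f a 1 = if f a then 1 else 0 := by
  cases h : f a <;> simp [ones, h]

theorem sum_ones_one (f : ℕ → Bool) (a m : ℕ) :
    ∑ k ∈ Finset.range m, ones f (k + a) 1 = ones f a m := by
  induction m with
  | zero => simp [ones]
  | succ m ih => rw [Finset.sum_range_succ, ih, ones_add f a m 1, add_comm m a]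

theorem ones_periodic {q : ℕ} (hf : Function.Periodic f q) (n : ℕ) :
    Function.Periodic (fun a => ones f a n) q := by
  intro a
  simp only [ones, List.range'_eq_map_range, List.map_map]
  congr 1
  refine List.map_congr_left fun j _ => ?_
  simp only [Function.comp]
  rw [add_right_comm, hf]

theorem ones_periodize_length (w : List Bool) (a : ℕ) :
    ones (periodize w) a w.length = w.count true := by
  rw [ones, ← rotate_eq_map_range']
  exact (List.rotate_perm w a).count_eq true

theorem isFactor_rotate (w : List Bool) (k : ℕ) {d n : ℕ} (h : d + n ≤ w.length) :
    IsFactor ((List.range' (k + d) n).map (periodize w)) (w.rotate k) := by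
  refine ⟨(List.range' k d).map (periodize w),
    (List.range' (k + (d + n)) (w.length - (d + n))).map (periodize w), ?_⟩
  rw [rotate_eq_map_range', ← List.map_append, ← List.map_append, List.range'_append_1,
    List.range'_append_1, Nat.add_sub_cancel' h]

theorem CyclBalanced.ones_le_of_same_rotation (hw : CyclBalanced w) (k : ℕ) {d d' n : ℕ}
    (h : d + n ≤ w.length) (h' : d' + n ≤ w.length) :
    (ones (periodize w) (k + d) n : ℤ) - ones (periodize w) (k + d') n ≤ 1 :=
  hw k _ _ (isFactor_rotate w k h) (isFactor_rotate w k h') (by simp)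

theorem CyclBalanced.ones_sub_le (hw : CyclBalanced w) {n : ℕ} (hn : 2 * n ≤ w.length)
    (hpos : 0 < w.length) (i j : ℕ) :
    (ones (periodize w) i n : ℤ) - ones (periodize w) j n ≤ 1 := by
  have hper := ones_periodic (periodize_periodic w) n
  have hmod : ∀ a, ones (periodize w) (a % w.length) n = ones (periodize w) a n :=
    hper.map_mod_nat
  rw [← hmod i, ← hmod j]
  have hi := Nat.mod_lt i hpos
  have hj := Nat.mod_lt j hpos
  generalize i % w.length = i at *
  generalize j % w.length = j at *
  have hshift : ∀ a, ones (periodize w) (a + w.length) n = ones (periodize w) a n := hper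
  rcases le_total i j with hij | hij
  · by_cases hd : j - i + n ≤ w.length
    · have := hw.ones_le_of_same_rotation i (d := 0) (d' := j - i) (n := n) (by omega) hd
      rwa [add_zero, Nat.add_sub_cancel' hij] at this
    · have := hw.ones_le_of_same_rotation j (d := w.length - (j - i)) (d' := 0) (n := n)
        (by omega) (by omega)
      rwa [add_zero, show j + (w.length - (j - i)) = i + w.length by omega, hshift] at this
  · by_cases hd : i - j + n ≤ w.length
    · have := hw.ones_le_of_same_rotation j (d := i - j) (d' := 0) (n := n) hd (by omega)
      rwa [add_zero, Nat.add_sub_cancel' hij] at this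
    · have := hw.ones_le_of_same_rotation i (d := 0) (d' := w.length - (i - j)) (n := n)
        (by omega) (by omega)
      rwa [add_zero, show i + (w.length - (i - j)) = j + w.length by omega, hshift] at this

theorem sum_ones (w : List Bool) (n : ℕ) :
    ∑ k ∈ Finset.range w.length, ones (periodize w) k n = n * w.count true := by
  induction n with
  | zero => simp [ones]
  | succ n ih =>
    simp_rw [ones_add _ _ n 1]
    rw [Finset.sum_add_distrib, ih, sum_ones_one, ones_periodize_length]
    ring

theorem CyclBalanced.abs_length_mul_ones_sub_lt_of_two_mul_le (hw : CyclBalanced w) {n : ℕ}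
    (hn : 2 * n ≤ w.length) (hpos : 0 < w.length) (i : ℕ) :
    |(w.length * ones (periodize w) i n : ℤ) - n * w.count true| < w.length := by
  have hmod : ones (periodize w) (i % w.length) n = ones (periodize w) i n :=
    (ones_periodic (periodize_periodic w) n).map_mod_nat i
  have hmem : i % w.length ∈ Finset.range w.length := Finset.mem_range.2 (Nat.mod_lt i hpos)
  have hsum : ∑ k ∈ Finset.range w.length, (ones (periodize w) k n : ℤ) = n * w.count true := by
    exact_mod_cast sum_ones w n
  have hconst : ∑ k ∈ Finset.range w.length, (ones (periodize w) i n : ℤ) =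
      w.length * ones (periodize w) i n := by simp
  have hone : ∑ k ∈ Finset.range w.length, (1 : ℤ) = w.length := by simp
  rw [← hsum, ← hconst, ← Finset.sum_sub_distrib, ← hone, abs_lt, ← Finset.sum_neg_distrib]
  constructor
  · refine Finset.sum_lt_sum (fun k _ => ?_) ⟨_, hmem, by rw [hmod, sub_self]; norm_num⟩
    linarith [hw.ones_sub_le hn hpos k i]
  · exact Finset.sum_lt_sum (fun k _ => hw.ones_sub_le hn hpos i k)
      ⟨_, hmem, by rw [hmod, sub_self]; norm_num⟩

theorem CyclBalanced.abs_length_mul_ones_sub_lt (hw : CyclBalanced w) {n : ℕ}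
    (hn : n ≤ w.length) (hpos : 0 < w.length) (i : ℕ) :
    |(w.length * ones (periodize w) i n : ℤ) - n * w.count true| < w.length := by
  by_cases h : 2 * n ≤ w.length
  · exact hw.abs_length_mul_ones_sub_lt_of_two_mul_le h hpos i
  · have hlt := hw.abs_length_mul_ones_sub_lt_of_two_mul_le (n := w.length - n) (by omega) hpos
      (i + n)
    have hadd := ones_add (periodize w) i n (w.length - n)
    rw [Nat.add_sub_cancel' hn, ones_periodize_length] at hadd
    rw [← abs_neg]
    convert! hlt using 2
    rw [hadd]
    push_cast [hn]
    ring

/-- The digit attached to a position on the discrete circle. -/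
def rotDigit (p : ℕ) {q : ℕ} (e : ZMod q) : Bool := decide (e.val < p)

/-- The coding of the orbit of `e` under the rotation by `-p` of the discrete circle. -/
def rotWord (p : ℕ) {q : ℕ} (e : ZMod q) (i : ℕ) : Bool :=
  rotDigit p (e - (i : ZMod q) * (p : ZMod q))

/-- Cyclically balanced words are codings of rotations. -/
theorem CyclBalanced.exists_periodize_eq_rotWord (hw : CyclBalanced w) (hpos : 0 < w.length) :
    ∃ e : ZMod w.length, periodize w = rotWord (w.count true) e := by
  set q := w.length with hq
  set p := w.count true with hp
  set D : ℕ → ℤ := fun i => q * ones (periodize w) 0 i - i * p with hD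
  have hDadd : ∀ i n, D (i + n) - D i = q * ones (periodize w) i n - n * p := fun i n => by
    simp only [hD]
    rw [ones_add, zero_add]
    push_cast
    ring
  have hper : Function.Periodic D q := fun i => by
    have := hDadd i q
    rw [ones_periodize_length, sub_self] at this
    linarith
  have hclose : ∀ i < q, ∀ j < q, D i - D j < q := fun i hi j hj => by
    rcases le_total i j with hij | hij
    · have h1 := hDadd i (j - i)
      have h2 := hw.abs_length_mul_ones_sub_lt (n := j - i) (by omega) hpos i
      rw [Nat.add_sub_cancel' hij] at h1
      rw [← h1, abs_lt] at h2
      linarith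
    · have h1 := hDadd j (i - j)
      have h2 := hw.abs_length_mul_ones_sub_lt (n := i - j) (by omega) hpos j
      rw [Nat.add_sub_cancel' hij] at h1
      rw [← h1, abs_lt] at h2
      linarith
  obtain ⟨j, hj, hmin⟩ := Finset.exists_min_image (Finset.range q) D
    ⟨0, Finset.mem_range.2 hpos⟩
  have hrange : ∀ i, 0 ≤ D i - D j ∧ D i - D j < q := fun i => by
    rw [← hper.map_mod_nat i]
    have hi := Nat.mod_lt i hpos
    exact ⟨sub_nonneg.2 (hmin _ (Finset.mem_range.2 hi)), hclose _ hi _ (Finset.mem_range.1 hj)⟩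
  refine ⟨((-D j : ℤ) : ZMod q), funext fun i => ?_⟩
  obtain ⟨h0, h1⟩ := hrange i
  have hval : (((-D j : ℤ) : ZMod q) - i * p).val = (D i - D j).toNat := by
    have hcast : ((-D j : ℤ) : ZMod q) - i * p = ((D i - D j).toNat : ZMod q) := by
      rw [← Int.cast_natCast (R := ZMod q) (D i - D j).toNat, Int.toNat_of_nonneg h0]
      simp only [hD]
      push_cast
      rw [ZMod.natCast_self]
      ring
    rw [hcast, ZMod.val_natCast_of_lt (by omega)]
  have hstep := hDadd i 1
  rw [ones_one] at hstep
  obtain ⟨h2, h3⟩ := hrange (i + 1)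
  rw [rotWord, rotDigit, hval]
  cases hf : periodize w i
  · simp only [hf, Bool.false_eq_true, if_false] at hstep
    push_cast at hstep
    refine (decide_eq_false ?_).symm
    omega
  · simp only [hf, if_true] at hstep
    push_cast at hstep
    refine (decide_eq_true ?_).symm
    omega

end BalancedWords

section RotationPoints

variable {p q : ℕ}

/-- The point of the circle whose binary expansion codes the orbit of `e`. -/
noncomputable def rotPoint (p : ℕ) {q : ℕ} (e : ZMod q) : ℝ := piW (rotWord p e)

/-- The circular gap between `rotPoint p e` and its neighbour, up to the normalisation which makes
it double along the orbit. -/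
noncomputable def rotGap (p : ℕ) {q : ℕ} (e : ZMod q) : ℝ :=
  rotPoint p e - rotPoint p (e + 1) + if e = -1 then 1 / 2 else 0

theorem rotWord_add (p : ℕ) {q : ℕ} (e : ZMod q) (i k : ℕ) :
    rotWord p e (i + k) = rotWord p (e - (k : ZMod q) * (p : ZMod q)) i := by
  simp only [rotWord]
  congr 1
  push_cast
  ring

theorem rotWord_zero (p : ℕ) {q : ℕ} (e : ZMod q) : rotWord p e 0 = rotDigit p e := by
  simp [rotWord]

theorem rotPoint_eq (p : ℕ) {q : ℕ} (e : ZMod q) :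
    rotPoint p e = ((if rotDigit p e then 1 else 0) + rotPoint p (e - (p : ZMod q))) / 2 := by
  have : (fun i => rotWord p e (i + 1)) = rotWord p (e - (p : ZMod q)) := by
    funext i
    rw [rotWord_add, Nat.cast_one, one_mul]
  rw [rotPoint, piW_eq, rotWord_zero, this, rotPoint]

theorem rotPoint_nonneg (p : ℕ) {q : ℕ} (e : ZMod q) : 0 ≤ rotPoint p e := piW_nonneg _

theorem rotPoint_le_one (p : ℕ) {q : ℕ} (e : ZMod q) : rotPoint p e ≤ 1 := piW_le_one _

theorem mul_ne_zero_of_lt (hco : p.Coprime q) {i : ℕ} (h0 : 0 < i) (hi : i < q) :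
    (i : ZMod q) * (p : ZMod q) ≠ 0 := by
  rw [← Nat.cast_mul, Ne, ZMod.natCast_eq_zero_iff]
  intro h
  exact absurd (Nat.le_of_dvd h0 (hco.symm.dvd_of_dvd_mul_right h)) hi.not_ge

theorem rotGap_of_ne {e : ZMod q} (he : e ≠ -1) :
    rotGap p e = rotPoint p e - rotPoint p (e + 1) := by
  rw [rotGap, if_neg he, add_zero]

theorem val_natCast_sub_one (hp : 0 < p) (hpq : p < q) : ((p : ZMod q) - 1).val = p - 1 := by
  rw [← Nat.cast_pred hp, ZMod.val_natCast_of_lt (by omega)]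

theorem natCast_ne_zero_of_lt (hp : 0 < p) (hpq : p < q) : (p : ZMod q) ≠ 0 := fun h =>
  absurd (Nat.le_of_dvd hp ((ZMod.natCast_eq_zero_iff _ _).1 h)) hpq.not_ge

theorem rotPoint_le_one_half {e : ZMod q} (he : p ≤ e.val) : rotPoint p e ≤ 1 / 2 := by
  rw [rotPoint_eq, rotDigit, decide_eq_false he.not_gt]
  simp only [Bool.false_eq_true, if_false]
  linarith [rotPoint_le_one p (e - (p : ZMod q))]

theorem rotPoint_sub_of_val_lt {e : ZMod q} (he : e.val < p) :
    rotPoint p (e - (p : ZMod q)) = 2 * rotPoint p e - 1 := by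
  rw [rotPoint_eq p e, rotDigit, decide_eq_true he, if_pos rfl]
  ring

theorem rotPoint_sub_of_le_val {e : ZMod q} (he : p ≤ e.val) :
    rotPoint p (e - (p : ZMod q)) = 2 * rotPoint p e := by
  rw [rotPoint_eq p e, rotDigit, decide_eq_false he.not_gt]
  simp only [Bool.false_eq_true, if_false]
  ring

/-- The left endpoint of the hole bounded by the periodic orbit. -/
noncomputable def leftPt (p q : ℕ) : ℝ := rotPoint p (p : ZMod q)

/-- The right endpoint of the hole bounded by the periodic orbit. -/
noncomputable def rightPt (p q : ℕ) : ℝ := rotPoint p ((p : ZMod q) - 1)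

theorem rotGap_sub_one (hp : 0 < p) (hpq : p < q) :
    rotGap p ((p : ZMod q) - 1) = rightPt p q - leftPt p q := by
  rw [rotGap_of_ne, sub_add_cancel, leftPt, rightPt]
  intro h
  exact natCast_ne_zero_of_lt hp hpq (by simpa [sub_eq_iff_eq_add] using h)

theorem sub_mul_ne (hco : p.Coprime q) {i : ℕ} (h0 : 0 < i) (hi : i < q) (e : ZMod q) :
    e - (i : ZMod q) * (p : ZMod q) ≠ e := fun h =>
  mul_ne_zero_of_lt hco h0 hi (sub_eq_self.1 h)

theorem leftPt_le_one_half (hpq : p < q) : leftPt p q ≤ 1 / 2 :=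
  rotPoint_le_one_half (ZMod.val_natCast_of_lt hpq).ge

variable [NeZero q]

theorem rotDigit_sub_rotDigit_add_one (hp : 0 < p) (hpq : p < q) (e : ZMod q) :
    ((if rotDigit p e then 1 else 0) - (if rotDigit p (e + 1) then 1 else 0) : ℝ) =
      (if e = p - 1 then 1 else 0) - (if e = -1 then 1 else 0) := by
  have he := ZMod.val_lt e
  have hcast : e + 1 = ((e.val + 1 : ℕ) : ZMod q) := by simp
  have hiff : ∀ m < q, (e + 1 = (m : ZMod q) ↔ (e + 1).val = m) := fun m hm =>
    ⟨fun h => by rw [h, ZMod.val_natCast_of_lt hm],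
      fun h => by rw [← h, ZMod.natCast_zmod_val]⟩
  have h1 : e = p - 1 ↔ (e + 1).val = p := by rw [← hiff p hpq, eq_sub_iff_add_eq]
  have h2 : e = -1 ↔ (e + 1).val = 0 := by
    rw [← hiff 0 (by omega), Nat.cast_zero, eq_neg_iff_add_eq_zero]
  simp only [h1, h2, rotDigit, decide_eq_true_eq]
  rcases Nat.lt_or_ge (e.val + 1) q with h | h
  · rw [hcast, ZMod.val_natCast_of_lt h]
    split_ifs <;> first | contradiction | omega | norm_num
  · have : (e + 1).val = 0 := by
      rw [hcast, show e.val + 1 = q by omega]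
      simp
    rw [this]
    split_ifs <;> first | contradiction | omega | norm_num

theorem rotGap_eq (hp : 0 < p) (hpq : p < q) (e : ZMod q) :
    rotGap p e = (if e = p - 1 then 1 / 4 else 0) + rotGap p (e - (p : ZMod q)) / 2 := by
  have hd := rotDigit_sub_rotDigit_add_one hp hpq e
  have hiff : e - (p : ZMod q) = -1 ↔ e = p - 1 := by
    rw [sub_eq_iff_eq_add, neg_add_eq_sub]
  simp only [rotGap, hiff]
  rw [rotPoint_eq p e, rotPoint_eq p (e + 1), show e + 1 - (p : ZMod q) = e - p + 1 by ring]
  split_ifs at hd ⊢ <;> linarith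

theorem rotGap_iterate_le (hp : 0 < p) (hpq : p < q) (e : ZMod q) (i : ℕ) :
    rotGap p (e - (i : ZMod q) * (p : ZMod q)) / 2 ^ i ≤ rotGap p e := by
  induction i generalizing e with
  | zero => simp
  | succ i ih =>
    have h1 := ih (e - (p : ZMod q))
    have h2 := rotGap_eq hp hpq e
    have h3 : (0 : ℝ) ≤ if e = (p : ZMod q) - 1 then 1 / 4 else 0 := by positivity
    rw [show e - ((i + 1 : ℕ) : ZMod q) * (p : ZMod q) = e - p - i * p by push_cast; ring, pow_succ,
      ← div_div]
    linarith

theorem rotGap_nonneg (hp : 0 < p) (hpq : p < q) (e : ZMod q) : 0 ≤ rotGap p e := by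
  have h := rotGap_iterate_le hp hpq e q
  rw [ZMod.natCast_self, zero_mul, sub_zero] at h
  have hQ : (1 : ℝ) < 2 ^ q := one_lt_pow₀ one_lt_two (NeZero.ne q)
  rw [div_le_iff₀ (by positivity)] at h
  nlinarith

theorem one_quarter_le_rotGap (hp : 0 < p) (hpq : p < q) :
    1 / 4 ≤ rotGap p ((p : ZMod q) - 1) := by
  rw [rotGap_eq hp hpq, if_pos rfl]
  linarith [rotGap_nonneg hp hpq ((p : ZMod q) - 1 - p)]

theorem exists_sub_mul_eq (hco : p.Coprime q) (e f : ZMod q) :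
    ∃ i : ℕ, e - (i : ZMod q) * (p : ZMod q) = f := by
  refine ⟨((e - f) * (p : ZMod q)⁻¹).val, ?_⟩
  rw [ZMod.natCast_zmod_val, mul_assoc, mul_comm _ (p : ZMod q), ZMod.coe_mul_inv_eq_one p hco]
  ring

theorem rotGap_pos (hp : 0 < p) (hpq : p < q) (hco : p.Coprime q) (e : ZMod q) :
    0 < rotGap p e := by
  obtain ⟨i, hi⟩ := exists_sub_mul_eq hco e ((p : ZMod q) - 1)
  refine lt_of_lt_of_le ?_ (rotGap_iterate_le hp hpq e i)
  rw [hi]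
  have := one_quarter_le_rotGap hp hpq
  positivity

theorem one_quarter_lt_rotGap (hp : 0 < p) (hpq : p < q) (hco : p.Coprime q) :
    1 / 4 < rotGap p ((p : ZMod q) - 1) := by
  rw [rotGap_eq hp hpq, if_pos rfl]
  linarith [rotGap_pos hp hpq hco ((p : ZMod q) - 1 - p)]

theorem rotGap_scaled (hp : 0 < p) (hpq : p < q) (hco : p.Coprime q) {j : ℕ} (hj : j < q) :
    rotGap p ((p : ZMod q) - 1 + (j : ZMod q) * (p : ZMod q)) =
      rotGap p ((p : ZMod q) - 1) / 2 ^ j := by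
  induction j with
  | zero => simp
  | succ j ih =>
    rw [rotGap_eq hp hpq, if_neg fun h =>
      mul_ne_zero_of_lt hco j.succ_pos hj (add_eq_left.1 h), zero_add,
      show (p : ZMod q) - 1 + ((j + 1 : ℕ) : ZMod q) * (p : ZMod q) - p =
        p - 1 + (j : ZMod q) * (p : ZMod q) by push_cast; ring, ih (by omega), pow_succ, div_div]

theorem rotPoint_lt_of_val_lt (hp : 0 < p) (hpq : p < q) (hco : p.Coprime q) {e f : ZMod q}
    (h : e.val < f.val) : rotPoint p f < rotPoint p e := by
  have key : ∀ m n : ℕ, m < n → n < q → rotPoint p (n : ZMod q) < rotPoint p (m : ZMod q) := by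
    intro m n hmn
    induction n, hmn using Nat.le_induction with
    | base =>
      intro hm
      have hne : (m : ZMod q) ≠ -1 := fun h => by
        rw [eq_neg_iff_add_eq_zero, ← Nat.cast_succ, ZMod.natCast_eq_zero_iff] at h
        exact absurd (Nat.le_of_dvd m.succ_pos h) hm.not_ge
      have := rotGap_pos hp hpq hco (m : ZMod q)
      rw [rotGap_of_ne hne] at this
      push_cast
      linarith
    | succ n hn ih =>
      intro hlt
      refine lt_trans ?_ (ih (by omega))
      have hne : (n : ZMod q) ≠ -1 := fun h => by
        rw [eq_neg_iff_add_eq_zero, ← Nat.cast_succ, ZMod.natCast_eq_zero_iff] at h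
        exact absurd (Nat.le_of_dvd n.succ_pos h) hlt.not_ge
      have := rotGap_pos hp hpq hco (n : ZMod q)
      rw [rotGap_of_ne hne] at this
      push_cast
      linarith
  have := key _ _ h (ZMod.val_lt f)
  rwa [ZMod.natCast_zmod_val, ZMod.natCast_zmod_val] at this

theorem rotPoint_le_of_val_le (hp : 0 < p) (hpq : p < q) (hco : p.Coprime q) {e f : ZMod q}
    (h : e.val ≤ f.val) : rotPoint p f ≤ rotPoint p e := by
  rcases h.eq_or_lt with h | h
  · rw [ZMod.val_injective q h]
  · exact (rotPoint_lt_of_val_lt hp hpq hco h).le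

theorem val_add_one_of_ne {e : ZMod q} (he : e ≠ -1) : (e + 1).val = e.val + 1 := by
  have hlt := ZMod.val_lt e
  have hcast : e + 1 = ((e.val + 1 : ℕ) : ZMod q) := by simp
  rw [hcast, ZMod.val_natCast_of_lt]
  refine lt_of_le_of_ne hlt fun h => he ?_
  rw [h, ZMod.natCast_self] at hcast
  exact eq_neg_of_add_eq_zero_left hcast

theorem rotPoint_pos (hp : 0 < p) (hco : p.Coprime q) (e : ZMod q) :
    0 < rotPoint p e := by
  refine lt_of_le_of_ne (rotPoint_nonneg p e) fun h0 => ?_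
  have hzero : ∀ i : ℕ, rotPoint p (e - (i : ZMod q) * (p : ZMod q)) = 0 := by
    intro i
    induction i with
    | zero => simpa using h0.symm
    | succ i ih =>
      rw [rotPoint_eq] at ih
      rw [show e - ((i + 1 : ℕ) : ZMod q) * (p : ZMod q) = e - i * p - p by push_cast; ring]
      have h1 := rotPoint_nonneg p (e - (i : ZMod q) * (p : ZMod q) - (p : ZMod q))
      have h2 : (0 : ℝ) ≤ if rotDigit p (e - (i : ZMod q) * (p : ZMod q)) then 1 else 0 := by
        positivity
      linarith
  obtain ⟨i, hi⟩ := exists_sub_mul_eq hco e 0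
  have := hzero i
  rw [hi, rotPoint_eq, rotDigit, ZMod.val_zero, decide_eq_true hp, if_pos rfl] at this
  linarith [rotPoint_nonneg p ((0 : ZMod q) - (p : ZMod q))]

theorem one_half_lt_rotPoint (hp : 0 < p) (hco : p.Coprime q) {e : ZMod q}
    (he : e.val < p) : 1 / 2 < rotPoint p e := by
  rw [rotPoint_eq, rotDigit, decide_eq_true he, if_pos rfl]
  linarith [rotPoint_pos hp hco (e - (p : ZMod q))]

theorem one_quarter_lt_rightPt_sub_leftPt (hp : 0 < p) (hpq : p < q) (hco : p.Coprime q) :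
    1 / 4 < rightPt p q - leftPt p q := by
  rw [← rotGap_sub_one hp hpq]; exact one_quarter_lt_rotGap hp hpq hco

theorem one_half_lt_rightPt (hp : 0 < p) (hpq : p < q) (hco : p.Coprime q) :
    1 / 2 < rightPt p q :=
  one_half_lt_rotPoint hp hco (by rw [val_natCast_sub_one hp hpq]; omega)

theorem rightPt_le_rotPoint (hp : 0 < p) (hpq : p < q) (hco : p.Coprime q) {e : ZMod q}
    (he : e.val < p) : rightPt p q ≤ rotPoint p e :=
  rotPoint_le_of_val_le hp hpq hco (by rw [val_natCast_sub_one hp hpq]; omega)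

theorem rotPoint_le_leftPt (hp : 0 < p) (hpq : p < q) (hco : p.Coprime q) {e : ZMod q}
    (he : p ≤ e.val) : rotPoint p e ≤ leftPt p q :=
  rotPoint_le_of_val_le hp hpq hco (by rwa [ZMod.val_natCast_of_lt hpq])

/-- The width of the two branch intervals at the ends of the hole. -/
noncomputable def branchWidth (p q : ℕ) : ℝ := (rightPt p q - leftPt p q) / 2 ^ q

theorem two_pow_mul_branchWidth (hp : 0 < p) (hpq : p < q) (hco : p.Coprime q) {i : ℕ}
    (h0 : 0 < i) (hi : i ≤ q) :
    2 ^ i * branchWidth p q = rotGap p ((p : ZMod q) - 1 - (i : ZMod q) * (p : ZMod q)) := by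
  have h := rotGap_scaled hp hpq hco (j := q - i) (by omega)
  rw [Nat.cast_sub hi, ZMod.natCast_self, zero_sub, neg_mul, ← sub_eq_add_neg,
    rotGap_sub_one hp hpq] at h
  rw [h, branchWidth]
  have : (2 : ℝ) ^ q = 2 ^ (q - i) * 2 ^ i := by rw [← pow_add, Nat.sub_add_cancel hi]
  rw [this]
  field_simp

theorem branchWidth_pos (hp : 0 < p) (hpq : p < q) (hco : p.Coprime q) : 0 < branchWidth p q := by
  have := one_quarter_lt_rightPt_sub_leftPt hp hpq hco
  exact div_pos (by linarith) (by positivity)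

theorem two_mul_branchWidth (hp : 0 < p) (hpq : p < q) (hco : p.Coprime q) :
    2 * branchWidth p q = rotPoint p (-1 : ZMod q) - rotPoint p (0 : ZMod q) + 1 / 2 := by
  have h := two_pow_mul_branchWidth hp hpq hco one_pos (by omega)
  rw [pow_one, Nat.cast_one, one_mul, sub_right_comm, sub_self, zero_sub] at h
  rw [h, rotGap, if_pos rfl, neg_add_cancel]

theorem val_neg_one_eq (hpq : p < q) : (-1 : ZMod q).val = q - 1 := by
  obtain ⟨k, rfl⟩ : ∃ k, q = k + 1 := ⟨q - 1, by omega⟩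
  exact ZMod.val_neg_one k

theorem leftPt_add_branchWidth_le (hp : 0 < p) (hpq : p < q) (hco : p.Coprime q) :
    leftPt p q + branchWidth p q ≤ 1 / 2 := by
  have h1 := two_mul_branchWidth hp hpq hco
  have h2 := rotPoint_sub_of_le_val (ZMod.val_natCast_of_lt hpq).ge
  rw [sub_self, ← leftPt] at h2
  have h3 := rotPoint_le_one_half (p := p) (e := (-1 : ZMod q))
    (by rw [val_neg_one_eq hpq]; omega)
  linarith

theorem lt_rightPt_sub_branchWidth (hp : 0 < p) (hpq : p < q) (hco : p.Coprime q) :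
    1 / 2 < rightPt p q - branchWidth p q := by
  have h1 := two_mul_branchWidth hp hpq hco
  have h2 := rotPoint_sub_of_val_lt (p := p) (e := (p : ZMod q) - 1)
    (by rw [val_natCast_sub_one hp hpq]; omega)
  rw [sub_right_comm, sub_self, zero_sub, ← rightPt] at h2
  have h3 := one_half_lt_rotPoint hp hco (e := (0 : ZMod q)) (by rwa [ZMod.val_zero])
  linarith

theorem not_mem_hole_of_leftBranch (hp : 0 < p) (hpq : p < q) (hco : p.Coprime q) {y : ℝ} {i : ℕ}
    (h0 : 0 < i) (hi : i < q)
    (hy1 : rotPoint p ((p : ZMod q) - (i : ZMod q) * (p : ZMod q)) ≤ y)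
    (hy2 : y ≤ rotPoint p ((p : ZMod q) - (i : ZMod q) * (p : ZMod q)) +
      2 ^ i * branchWidth p q) :
    (y ≤ leftPt p q ∧ p ≤ ((p : ZMod q) - (i : ZMod q) * (p : ZMod q)).val) ∨
      (rightPt p q ≤ y ∧ ((p : ZMod q) - (i : ZMod q) * (p : ZMod q)).val < p) := by
  have hne := sub_mul_ne hco h0 hi (p : ZMod q)
  have hgap := two_pow_mul_branchWidth hp hpq hco h0 hi.le
  rw [sub_right_comm] at hgap
  generalize (p : ZMod q) - (i : ZMod q) * (p : ZMod q) = e at *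
  rcases Nat.lt_or_ge e.val p with he | he
  · exact Or.inr ⟨(rightPt_le_rotPoint hp hpq hco he).trans hy1, he⟩
  · refine Or.inl ⟨?_, he⟩
    have hne1 : e - 1 ≠ -1 := fun h => by
      have : e = 0 := by simpa [sub_eq_iff_eq_add] using h
      rw [this, ZMod.val_zero] at he
      omega
    rw [hgap, rotGap_of_ne hne1, sub_add_cancel, add_sub_cancel] at hy2
    refine hy2.trans (rotPoint_le_leftPt hp hpq hco ?_)
    have h1 := val_add_one_of_ne hne1
    rw [sub_add_cancel] at h1
    have h2 : e.val ≠ p := fun h => hne (by rw [← h, ZMod.natCast_zmod_val])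
    omega

theorem not_mem_hole_of_rightBranch (hp : 0 < p) (hpq : p < q) (hco : p.Coprime q) {y : ℝ} {i : ℕ}
    (h0 : 0 < i) (hi : i < q)
    (hy1 : rotPoint p ((p : ZMod q) - 1 - (i : ZMod q) * (p : ZMod q)) -
      2 ^ i * branchWidth p q ≤ y)
    (hy2 : y ≤ rotPoint p ((p : ZMod q) - 1 - (i : ZMod q) * (p : ZMod q))) :
    (y ≤ leftPt p q ∧ p ≤ ((p : ZMod q) - 1 - (i : ZMod q) * (p : ZMod q)).val) ∨
      (rightPt p q ≤ y ∧ ((p : ZMod q) - 1 - (i : ZMod q) * (p : ZMod q)).val < p) := by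
  have hne := sub_mul_ne hco h0 hi ((p : ZMod q) - 1)
  rw [two_pow_mul_branchWidth hp hpq hco h0 hi.le] at hy1
  generalize (p : ZMod q) - 1 - (i : ZMod q) * (p : ZMod q) = e at *
  rcases Nat.lt_or_ge e.val p with he | he
  · refine Or.inr ⟨?_, he⟩
    have hne1 : e ≠ -1 := fun h => by
      rw [h, val_neg_one_eq hpq] at he
      have := val_natCast_sub_one hp hpq
      refine hne (ZMod.val_injective q ?_)
      rw [h, val_neg_one_eq hpq, this]
      omega
    rw [rotGap_of_ne hne1, sub_sub_cancel] at hy1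
    refine le_trans (rightPt_le_rotPoint hp hpq hco ?_) hy1
    rw [val_add_one_of_ne hne1]
    have h2 : e.val ≠ p - 1 := fun h =>
      hne (ZMod.val_injective q (by rw [h, val_natCast_sub_one hp hpq]))
    omega
  · exact Or.inl ⟨hy2.trans (rotPoint_le_leftPt hp hpq hco he), he⟩

theorem iterate_T_of_mem_leftBranch (hp : 0 < p) (hpq : p < q) (hco : p.Coprime q) {x : ℝ}
    (hx : x ∈ Icc (leftPt p q) (leftPt p q + branchWidth p q)) {i : ℕ} (hi : i ≤ q) :
    T^[i] x = rotPoint p ((p : ZMod q) - (i : ZMod q) * (p : ZMod q)) +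
      2 ^ i * (x - leftPt p q) := by
  obtain ⟨hx1, hx2⟩ := hx
  induction i with
  | zero => simp [leftPt]
  | succ i ih =>
    have ih := ih (by omega)
    rw [show (p : ZMod q) - ((i + 1 : ℕ) : ZMod q) * (p : ZMod q) = p - i * p - p by
      push_cast; ring, Function.iterate_succ_apply']
    rcases Nat.eq_zero_or_pos i with rfl | h0
    · rw [Function.iterate_zero, id_eq,
        T_of_le (hx2.trans (leftPt_add_branchWidth_le hp hpq hco)), Nat.cast_zero, zero_mul,
        sub_zero, rotPoint_sub_of_le_val (ZMod.val_natCast_of_lt hpq).ge, leftPt]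
      ring
    · have hs : (0 : ℝ) < 2 ^ i := by positivity
      have hlow : rotPoint p ((p : ZMod q) - (i : ZMod q) * (p : ZMod q)) ≤ T^[i] x := by
        rw [ih]; nlinarith
      have hup : T^[i] x ≤ rotPoint p ((p : ZMod q) - (i : ZMod q) * (p : ZMod q)) +
          2 ^ i * branchWidth p q := by
        rw [ih]; nlinarith
      rcases not_mem_hole_of_leftBranch hp hpq hco h0 (by omega) hlow hup with ⟨h1, h2⟩ | ⟨h1, h2⟩
      · rw [T_of_le (h1.trans (leftPt_le_one_half hpq)), rotPoint_sub_of_le_val h2, ih]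
        ring
      · rw [T_of_lt ((one_half_lt_rightPt hp hpq hco).trans_le h1), rotPoint_sub_of_val_lt h2, ih]
        ring

theorem iterate_T_of_mem_rightBranch (hp : 0 < p) (hpq : p < q) (hco : p.Coprime q) {x : ℝ}
    (hx : x ∈ Icc (rightPt p q - branchWidth p q) (rightPt p q)) {i : ℕ} (hi : i ≤ q) :
    T^[i] x = rotPoint p ((p : ZMod q) - 1 - (i : ZMod q) * (p : ZMod q)) +
      2 ^ i * (x - rightPt p q) := by
  obtain ⟨hx1, hx2⟩ := hx
  induction i with
  | zero => simp [rightPt]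
  | succ i ih =>
    have ih := ih (by omega)
    rw [show (p : ZMod q) - 1 - ((i + 1 : ℕ) : ZMod q) * (p : ZMod q) = p - 1 - i * p - p by
      push_cast; ring, Function.iterate_succ_apply']
    rcases Nat.eq_zero_or_pos i with rfl | h0
    · rw [Function.iterate_zero, id_eq,
        T_of_lt ((lt_rightPt_sub_branchWidth hp hpq hco).trans_le hx1), Nat.cast_zero, zero_mul,
        sub_zero, rotPoint_sub_of_val_lt (by rw [val_natCast_sub_one hp hpq]; omega), rightPt]
      ring
    · have hs : (0 : ℝ) < 2 ^ i := by positivity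
      have hlow : rotPoint p ((p : ZMod q) - 1 - (i : ZMod q) * (p : ZMod q)) -
          2 ^ i * branchWidth p q ≤ T^[i] x := by
        rw [ih]; nlinarith
      have hup : T^[i] x ≤ rotPoint p ((p : ZMod q) - 1 - (i : ZMod q) * (p : ZMod q)) := by
        rw [ih]; nlinarith
      rcases not_mem_hole_of_rightBranch hp hpq hco h0 (by omega) hlow hup with ⟨h1, h2⟩ | ⟨h1, h2⟩
      · rw [T_of_le (h1.trans (leftPt_le_one_half hpq)), rotPoint_sub_of_le_val h2, ih]
        ring
      · rw [T_of_lt ((one_half_lt_rightPt hp hpq hco).trans_le h1), rotPoint_sub_of_val_lt h2, ih]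
        ring

theorem iterate_T_not_mem_Ioo (hp : 0 < p) (hpq : p < q) (hco : p.Coprime q) {x : ℝ}
    (hx : x ∈ Icc (leftPt p q) (leftPt p q + branchWidth p q) ∪
      Icc (rightPt p q - branchWidth p q) (rightPt p q)) {i : ℕ} (hi : i < q) :
    T^[i] x ∉ Ioo (leftPt p q + branchWidth p q) (rightPt p q - branchWidth p q) := by
  have hw := branchWidth_pos hp hpq hco
  have hs : (0 : ℝ) < 2 ^ i := by positivity
  rcases Nat.eq_zero_or_pos i with rfl | h0
  · rintro ⟨h1, h2⟩
    simp only [Function.iterate_zero, id_eq] at h1 h2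
    rcases hx with hx | hx
    · exact h1.not_ge hx.2
    · exact h2.not_ge hx.1
  rintro ⟨h1, h2⟩
  rcases hx with hx | hx
  · have h := iterate_T_of_mem_leftBranch hp hpq hco hx hi.le
    rcases not_mem_hole_of_leftBranch hp hpq hco h0 hi (y := T^[i] x)
      (by rw [h]; nlinarith [hx.1]) (by rw [h]; nlinarith [hx.2]) with h3 | h3 <;> linarith [h3.1]
  · have h := iterate_T_of_mem_rightBranch hp hpq hco hx hi.le
    rcases not_mem_hole_of_rightBranch hp hpq hco h0 hi (y := T^[i] x)
      (by rw [h]; nlinarith [hx.1]) (by rw [h]; nlinarith [hx.2]) with h3 | h3 <;> linarith [h3.1]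

theorem iterate_T_length_leftBranch (hp : 0 < p) (hpq : p < q) (hco : p.Coprime q) {x : ℝ}
    (hx : x ∈ Icc (leftPt p q) (leftPt p q + branchWidth p q)) :
    T^[q] x = leftPt p q + 2 ^ q * (x - leftPt p q) := by
  rw [iterate_T_of_mem_leftBranch hp hpq hco hx le_rfl, ZMod.natCast_self, zero_mul, sub_zero,
    ← leftPt]

theorem iterate_T_length_rightBranch (hp : 0 < p) (hpq : p < q) (hco : p.Coprime q) {x : ℝ}
    (hx : x ∈ Icc (rightPt p q - branchWidth p q) (rightPt p q)) :
    T^[q] x = rightPt p q + 2 ^ q * (x - rightPt p q) := by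
  rw [iterate_T_of_mem_rightBranch hp hpq hco hx le_rfl, ZMod.natCast_self, zero_mul, sub_zero,
    ← rightPt]

end RotationPoints

section ExtremalWords

variable {p q : ℕ} {s t w : List Bool}

theorem head?_eq_some_iff_periodize_zero (hw : 0 < w.length) {b : Bool} :
    w.head? = some b ↔ periodize w 0 = b := by
  cases w with
  | nil => simp at hw
  | cons a l => simp [periodize]

theorem IsSWord.piW_periodize (hp : 0 < p) (hpq : p < q) (hco : p.Coprime q)
    (hs : IsSWord p q s) : piW (periodize s) = leftPt p q := by
  obtain ⟨rfl, rfl, hbal, hhead, hmax⟩ := hs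
  have hlen : 0 < s.length := by omega
  have : NeZero s.length := ⟨hlen.ne'⟩
  obtain ⟨e, he⟩ := hbal.exists_periodize_eq_rotWord hlen
  have hev : s.count true ≤ e.val := by
    rwa [head?_eq_some_iff_periodize_zero hlen, he, rotWord_zero, rotDigit,
      decide_eq_false_iff_not, not_lt] at hhead
  obtain ⟨k, hk⟩ := exists_sub_mul_eq hco e (s.count true : ZMod s.length)
  have hrot : periodize (s.rotate k) =
      rotWord (s.count true) (s.count true : ZMod s.length) := by
    funext i
    rw [periodize_rotate, he, rotWord_add, hk]
  have hrlen : (s.rotate k).length = s.length := List.length_rotate ..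
  have hle := (hmax (s.rotate k) hrlen ((List.rotate_perm s k).count_eq true) (hbal.rotate k)
    (by rw [head?_eq_some_iff_periodize_zero (by omega), hrot, rotWord_zero, rotDigit,
      ZMod.val_natCast_of_lt hpq]; simp)).piW_periodize_le hrlen hlen
  rw [hrot] at hle
  refine le_antisymm ?_ hle
  rw [he]
  exact rotPoint_le_leftPt hp hpq hco hev

theorem IsTWord.piW_periodize (hp : 0 < p) (hpq : p < q) (hco : p.Coprime q)
    (ht : IsTWord p q t) : piW (periodize t) = rightPt p q := by
  obtain ⟨rfl, rfl, hbal, hhead, hmin⟩ := ht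
  have hlen : 0 < t.length := by omega
  have : NeZero t.length := ⟨hlen.ne'⟩
  obtain ⟨e, he⟩ := hbal.exists_periodize_eq_rotWord hlen
  have hev : e.val < t.count true := by
    rwa [head?_eq_some_iff_periodize_zero hlen, he, rotWord_zero, rotDigit,
      decide_eq_true_iff] at hhead
  obtain ⟨k, hk⟩ := exists_sub_mul_eq hco e ((t.count true : ZMod t.length) - 1)
  have hrot : periodize (t.rotate k) =
      rotWord (t.count true) ((t.count true : ZMod t.length) - 1) := by
    funext i
    rw [periodize_rotate, he, rotWord_add, hk]
  have hrlen : (t.rotate k).length = t.length := List.length_rotate ..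
  have hle := (hmin (t.rotate k) hrlen ((List.rotate_perm t k).count_eq true) (hbal.rotate k)
    (by rw [head?_eq_some_iff_periodize_zero (by omega), hrot, rotWord_zero, rotDigit,
      val_natCast_sub_one hp hpq, decide_eq_true_iff]; omega)).piW_periodize_le hrlen.symm
      (by omega)
  rw [hrot] at hle
  refine le_antisymm hle ?_
  rw [he]
  exact rightPt_le_rotPoint hp hpq hco hev

theorem piW_wordThenPeriodic_left (hp : 0 < p) (hpq : p < q) (hco : p.Coprime q)
    (hs : IsSWord p q s) (ht : IsTWord p q t) :
    piW (wordThenPeriodic s t) = leftPt p q + branchWidth p q := by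
  rw [piW_wordThenPeriodic, wordVal_eq, hs.piW_periodize hp hpq hco, ht.piW_periodize hp hpq hco,
    hs.1, branchWidth]
  ring

theorem piW_wordThenPeriodic_right (hp : 0 < p) (hpq : p < q) (hco : p.Coprime q)
    (hs : IsSWord p q s) (ht : IsTWord p q t) :
    piW (wordThenPeriodic t s) = rightPt p q - branchWidth p q := by
  rw [piW_wordThenPeriodic, wordVal_eq, hs.piW_periodize hp hpq hco, ht.piW_periodize hp hpq hco,
    ht.1, branchWidth]
  ring

end ExtremalWords

section Survivors

variable {p q : ℕ}

/-- The points of the unit interval whose orbit under `T` avoids the open interval `(a, b)`. -/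
def survivors (a b : ℝ) : Set ℝ := {x | x ∈ Icc (0 : ℝ) 1 ∧ ∀ n : ℕ, T^[n] x ∉ Ioo a b}

theorem iterate_T_mem_survivors {a b x : ℝ} (hx : x ∈ survivors a b) (n : ℕ) :
    T^[n] x ∈ survivors a b :=
  ⟨iterate_T_mem_Icc hx.1 n, fun k => by rw [← Function.iterate_add_apply]; exact hx.2 _⟩

theorem dimH_survivors_le (hp : 0 < p) (hpq : p < q) (hco : p.Coprime q) :
    dimH (survivors (leftPt p q + branchWidth p q) (rightPt p q - branchWidth p q)) ≤
      (q : ℝ≥0∞)⁻¹ := by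
  have : NeZero q := ⟨by omega⟩
  set J := survivors (leftPt p q + branchWidth p q) (rightPt p q - branchWidth p q) with hJ
  have hδ := one_quarter_lt_rightPt_sub_leftPt hp hpq hco
  have hQ : (0 : ℝ) < 2 ^ q := by positivity
  have hE : dimH (J ∩ Icc (leftPt p q) (rightPt p q)) ≤ (q : ℝ≥0∞)⁻¹ := by
    refine dimH_le_inv_of_forall_exists_contraction (NeZero.ne q) (u := leftPt p q)
      (ℓ := rightPt p q - leftPt p q) (by linarith)
      (fun x hx => by rw [add_sub_cancel]; exact hx.2)
      (fun i => if i then rightPt p q else leftPt p q) ?_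
    rintro x ⟨hxJ, hx1, hx2⟩
    have hscale : 2 ^ q * branchWidth p q = rightPt p q - leftPt p q := by
      rw [branchWidth]; field_simp
    rcases le_or_gt x (leftPt p q + branchWidth p q) with h | h
    · have hT := iterate_T_length_leftBranch hp hpq hco ⟨hx1, h⟩
      refine ⟨false, T^[q] x, ⟨iterate_T_mem_survivors hxJ q, ?_⟩, ?_⟩
      · rw [hT]
        constructor <;> nlinarith
      · rw [hT]
        simp only [Bool.false_eq_true, if_false]
        field_simp
        ring
    · have h' : rightPt p q - branchWidth p q ≤ x := by
        by_contra hcon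
        exact hxJ.2 0 ⟨h, not_le.1 hcon⟩
      have hT := iterate_T_length_rightBranch hp hpq hco ⟨h', hx2⟩
      refine ⟨true, T^[q] x, ⟨iterate_T_mem_survivors hxJ q, ?_⟩, ?_⟩
      · rw [hT]
        constructor <;> nlinarith
      · rw [hT]
        simp only [if_true]
        field_simp
        ring
  have hcover : J ⊆ Avoids (leftPt p q) (rightPt p q) ∪
      ⋃ n : ℕ, T^[n] ⁻¹' (J ∩ Icc (leftPt p q) (rightPt p q)) := by
    intro x hx
    by_cases h : ∀ n, T^[n] x ∉ Icc (leftPt p q) (rightPt p q)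
    · exact Or.inl ⟨hx.1, h⟩
    · push Not at h
      obtain ⟨n, hn⟩ := h
      exact Or.inr (mem_iUnion.2 ⟨n, iterate_T_mem_survivors hx n, hn⟩)
  refine (dimH_mono hcover).trans ?_
  rw [dimH_union, dimH_Avoids (leftPt_le_one_half hpq) (one_half_lt_rightPt hp hpq hco).le hδ,
    dimH_iUnion]
  exact max_le zero_le (iSup_le fun n => (dimH_preimage_iterate_T_le _ n).trans hE)

/-- The point of the survivor set whose orbit follows the branches prescribed by `x`. -/
noncomputable def cantorPt (p : ℕ) {q : ℕ} (hq : 1 ≤ q) (x : ℕ → Fin 2) : ℝ :=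
  leftPt p q + (rightPt p q - leftPt p q) * (2 ^ q - 1) * spread hq x

theorem cantorPt_eq (p : ℕ) (hq : 1 ≤ q) (x : ℕ → Fin 2) :
    cantorPt p hq x = leftPt p q + (rightPt p q - leftPt p q) * (2 ^ q - 1) * (x 0 : ℕ) / 2 ^ q +
      (cantorPt p hq (fun i => x (i + 1)) - leftPt p q) / 2 ^ q := by
  rw [cantorPt, spread_eq, cantorPt]
  ring

theorem cantorPt_mem_Icc (hp : 0 < p) (hpq : p < q) (hco : p.Coprime q) (hq : 1 ≤ q)
    (x : ℕ → Fin 2) : cantorPt p hq x ∈ Icc (leftPt p q) (rightPt p q) := by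
  have : NeZero q := ⟨by omega⟩
  have hδ := one_quarter_lt_rightPt_sub_leftPt hp hpq hco
  have hQ : (0 : ℝ) < 2 ^ q - 1 := sub_pos.2 (one_lt_pow₀ one_lt_two (NeZero.ne q))
  have h0 := spread_nonneg hq x
  have h1 := spread_le hq x
  rw [le_div_iff₀ hQ] at h1
  rw [cantorPt]
  constructor
  · have : 0 ≤ (rightPt p q - leftPt p q) * (2 ^ q - 1) * spread hq x :=
      mul_nonneg (mul_nonneg (by linarith) hQ.le) h0
    linarith
  · nlinarith

theorem cantorPt_mem_branches (hp : 0 < p) (hpq : p < q) (hco : p.Coprime q) (hq : 1 ≤ q)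
    (x : ℕ → Fin 2) :
    cantorPt p hq x ∈ Icc (leftPt p q) (leftPt p q + branchWidth p q) ∪
        Icc (rightPt p q - branchWidth p q) (rightPt p q) ∧
      T^[q] (cantorPt p hq x) = cantorPt p hq fun i => x (i + 1) := by
  have : NeZero q := ⟨by omega⟩
  have hQ : (0 : ℝ) < 2 ^ q := by positivity
  obtain ⟨h0, h1⟩ := cantorPt_mem_Icc hp hpq hco hq fun i => x (i + 1)
  have h := cantorPt_eq p hq x
  set y := cantorPt p hq fun i => x (i + 1)
  have hy0 : 0 ≤ (y - leftPt p q) / 2 ^ q := div_nonneg (by linarith) hQ.le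
  have hy1 : (y - leftPt p q) / 2 ^ q ≤ branchWidth p q := by
    rw [branchWidth]; gcongr
  obtain hx | hx : x 0 = 0 ∨ x 0 = 1 := by omega
  · have hc : cantorPt p hq x = leftPt p q + (y - leftPt p q) / 2 ^ q := by
      rw [h, hx]; simp
    have hmem : cantorPt p hq x ∈ Icc (leftPt p q) (leftPt p q + branchWidth p q) := by
      constructor <;> linarith
    refine ⟨Or.inl hmem, ?_⟩
    rw [iterate_T_length_leftBranch hp hpq hco hmem, hc]
    field_simp
    ring
  · have hc : cantorPt p hq x = rightPt p q - branchWidth p q + (y - leftPt p q) / 2 ^ q := by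
      rw [h, hx, branchWidth]
      simp only [Fin.val_one, Nat.cast_one]
      field_simp
      ring
    have hmem : cantorPt p hq x ∈ Icc (rightPt p q - branchWidth p q) (rightPt p q) := by
      constructor <;> linarith
    refine ⟨Or.inr hmem, ?_⟩
    rw [iterate_T_length_rightBranch hp hpq hco hmem, hc, branchWidth]
    field_simp
    ring

theorem iterate_T_mul_cantorPt (hp : 0 < p) (hpq : p < q) (hco : p.Coprime q) (hq : 1 ≤ q)
    (x : ℕ → Fin 2) (k : ℕ) :
    T^[q * k] (cantorPt p hq x) = cantorPt p hq fun i => x (i + k) := by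
  induction k with
  | zero => simp
  | succ k ih =>
    rw [Nat.mul_succ, Nat.add_comm, Function.iterate_add_apply, ih,
      (cantorPt_mem_branches hp hpq hco hq _).2]
    simp only [add_right_comm, add_assoc]

theorem cantorPt_mem_survivors (hp : 0 < p) (hpq : p < q) (hco : p.Coprime q) (hq : 1 ≤ q)
    (x : ℕ → Fin 2) :
    cantorPt p hq x ∈
      survivors (leftPt p q + branchWidth p q) (rightPt p q - branchWidth p q) := by
  have : NeZero q := ⟨by omega⟩
  have hmem := cantorPt_mem_Icc hp hpq hco hq x
  refine ⟨⟨(rotPoint_nonneg _ _).trans hmem.1, hmem.2.trans (rotPoint_le_one _ _)⟩, fun n => ?_⟩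
  rw [← Nat.mod_add_div n q, Function.iterate_add_apply, iterate_T_mul_cantorPt hp hpq hco]
  exact iterate_T_not_mem_Ioo hp hpq hco (cantorPt_mem_branches hp hpq hco hq _).1
    (Nat.mod_lt _ (by omega))

theorem le_dimH_survivors (hp : 0 < p) (hpq : p < q) (hco : p.Coprime q) :
    (q : ℝ≥0∞)⁻¹ ≤
      dimH (survivors (leftPt p q + branchWidth p q) (rightPt p q - branchWidth p q)) := by
  have : NeZero q := ⟨by omega⟩
  have hq : 2 ≤ q := by omega
  have hq1 : 1 ≤ q := one_le_two.trans hq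
  have hδ := one_quarter_lt_rightPt_sub_leftPt hp hpq hco
  have hQ : (0 : ℝ) < 2 ^ q - 1 := sub_pos.2 (one_lt_pow₀ one_lt_two (NeZero.ne q))
  set c := (rightPt p q - leftPt p q) * (2 ^ q - 1) with hc
  have hc0 : c ≠ 0 := (mul_pos (by linarith) hQ).ne'
  have hrange : range (spread hq1) =
      (fun y => c⁻¹ * (y - leftPt p q)) '' range (cantorPt p hq1) := by
    rw [← range_comp]
    congr 1
    funext x
    simp only [Function.comp, cantorPt, ← hc, add_sub_cancel_left]
    rw [inv_mul_cancel_left₀ hc0]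
  have hlip : LipschitzWith (Real.nnabs c⁻¹) fun y : ℝ => c⁻¹ * (y - leftPt p q) :=
    LipschitzWith.of_dist_le_mul fun x y => by
      rw [Real.dist_eq, Real.dist_eq, ← mul_sub, abs_mul, sub_sub_sub_cancel_right,
        Real.coe_nnabs]
  calc (q : ℝ≥0∞)⁻¹ ≤ dimH (range (spread hq1)) := le_dimH_range_spread hq
    _ ≤ dimH (range (cantorPt p hq1)) := by rw [hrange]; exact hlip.dimH_image_le _
    _ ≤ _ := dimH_mono (range_subset_iff.2 (cantorPt_mem_survivors hp hpq hco hq1))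

end Survivors

theorem stmt_18 (p q : ℕ) (hp : 0 < p) (hpq : p < q) (hco : Nat.Coprime p q)
    (s t : List Bool) (hs : IsSWord p q s) (ht : IsTWord p q t) :
    dimH {x : ℝ | x ∈ Set.Icc (0:ℝ) 1 ∧ ∀ n : ℕ,
        T^[n] x ∉ Set.Ioo (piW (wordThenPeriodic s t)) (piW (wordThenPeriodic t s))}
      = (q : ENNReal)⁻¹ := by
  rw [piW_wordThenPeriodic_left hp hpq hco hs ht, piW_wordThenPeriodic_right hp hpq hco hs ht]
  exact le_antisymm (dimH_survivors_le hp hpq hco) (le_dimH_survivors hp hpq hco)
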